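/- Let I ⊆ ℝ be an open interval and f : ℝ → ℝ be continuous on I. Suppose f is specularly differentiable at every point of I, and the function f^S is itself specularly differentiable at every point of I (i.e., the second order specular derivative f^SS(x) = (f^S)^S(x) exists for all x ∈ I). Then f^S is continuous on I. -/

import Mathlib

open Filter Topology Set

/-- The combination function `A(α,β)` from the paper: the slope of the specular
tangent determined by one-sided slopes `α` (right) and `β` (left). -/
noncomputable def specA (α β : ℝ) : ℝ :=
  if α + β = 0 then 0
  else (α * β - 1 + Real.sqrt ((α ^ 2 + 1) * (β ^ 2 + 1))) / (α + β)

/-- `HasSpecData f x₀ L α β` means: the left and right limits of `f` at `x₀` both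
exist and are equal to `L`, the right specular derivative of `f` at `x₀` is `α`,
and the left specular derivative of `f` at `x₀` is `β`. -/
def HasSpecData (f : ℝ → ℝ) (x₀ L α β : ℝ) : Prop :=
  Tendsto f (𝓝[<] x₀) (𝓝 L) ∧ Tendsto f (𝓝[>] x₀) (𝓝 L) ∧
    Tendsto (fun x => (f x - L) / (x - x₀)) (𝓝[>] x₀) (𝓝 α) ∧
    Tendsto (fun x => (f x - L) / (x - x₀)) (𝓝[<] x₀) (𝓝 β)

/-- `f` is specularly differentiable at `x₀`. -/
def SpecDifferentiableAt (f : ℝ → ℝ) (x₀ : ℝ) : Prop :=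
  ∃ L α β, HasSpecData f x₀ L α β

/-- `f` is specularly differentiable at `x₀` with specular derivative `d`. -/
def HasSpecDerivAt (f : ℝ → ℝ) (x₀ d : ℝ) : Prop :=
  ∃ L α β, HasSpecData f x₀ L α β ∧ d = specA α β

/-!
The value `A(α, β)` is a weighted mean of `α` and `β`, so a bound on both one-sided slopes is a
bound on the specular derivative. If the graph of a continuous `f` rises from `x` to `y` with slope
more than `M`, then where `t ↦ f t - M t` first starts to exceed an intermediate value, both
one-sided slopes of `f` are at least `M`, hence so is the specular derivative: this is a mean value
inequality. It shows that if `f^S` has a limit `L` at `x`, then the difference quotients of `f` at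
`x` tend to `L` as well. So `f` is differentiable at `x` with derivative `L`, and
`f^S(x) = A(L, L) = L`. A specularly differentiable `f^S` has such limits everywhere.
-/

section CombinationFunction

theorem specA_eq_weighted_mean (α β : ℝ) :
    specA α β = (α * √(β ^ 2 + 1) + β * √(α ^ 2 + 1)) / (√(α ^ 2 + 1) + √(β ^ 2 + 1)) := by
  have hα : √(α ^ 2 + 1) ^ 2 = α ^ 2 + 1 := Real.sq_sqrt (by positivity)
  have hβ : √(β ^ 2 + 1) ^ 2 = β ^ 2 + 1 := Real.sq_sqrt (by positivity)
  rw [specA, Real.sqrt_mul (by positivity)]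
  split_ifs with h
  · obtain rfl : α = -β := eq_neg_of_add_eq_zero_left h
    rw [neg_sq, neg_mul, neg_add_cancel, zero_div]
  · rw [div_eq_div_iff h (by positivity)]
    linear_combination √(β ^ 2 + 1) * hα + √(α ^ 2 + 1) * hβ

theorem specA_self (α : ℝ) : specA α α = α := by
  rw [specA_eq_weighted_mean, ← mul_add, mul_div_cancel_right₀ _ (by positivity)]

theorem specA_neg (α β : ℝ) : specA (-α) (-β) = -specA α β := by
  simp only [specA_eq_weighted_mean, neg_sq]
  ring

theorem le_specA {m α β : ℝ} (hα : m ≤ α) (hβ : m ≤ β) : m ≤ specA α β := by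
  rw [specA_eq_weighted_mean, le_div_iff₀ (by positivity), mul_add, add_comm (m * _)]
  gcongr

end CombinationFunction

section SpecularData

variable {f : ℝ → ℝ} {x L α β d : ℝ}

theorem HasSpecData.tendsto_nhdsNE (h : HasSpecData f x L α β) : Tendsto f (𝓝[≠] x) (𝓝 L) := by
  rw [← nhdsLT_sup_nhdsGT]
  exact h.1.sup h.2.1

theorem HasSpecData.eq_of_continuousAt (h : HasSpecData f x L α β) (hf : ContinuousAt f x) :
    L = f x :=
  tendsto_nhds_unique h.tendsto_nhdsNE hf.continuousWithinAt

theorem HasSpecDerivAt.exists_hasDerivWithinAt (h : HasSpecDerivAt f x d) (hf : ContinuousAt f x) :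
    ∃ α β, HasDerivWithinAt f α (Ioi x) x ∧ HasDerivWithinAt f β (Iio x) x ∧ d = specA α β := by
  obtain ⟨L, α, β, hdata, hd⟩ := h
  obtain rfl := hdata.eq_of_continuousAt hf
  obtain ⟨-, -, hright, hleft⟩ := hdata
  rw [← slope_fun_def_field] at hright hleft
  exact ⟨α, β, (hasDerivWithinAt_iff_tendsto_slope' self_notMem_Ioi).2 hright,
    (hasDerivWithinAt_iff_tendsto_slope' self_notMem_Iio).2 hleft, hd⟩

theorem HasSpecDerivAt.eq_of_hasDerivAt (h : HasSpecDerivAt f x d) (hf : HasDerivAt f L x) :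
    d = L := by
  obtain ⟨α, β, hα, hβ, rfl⟩ := h.exists_hasDerivWithinAt hf.continuousAt
  rw [(uniqueDiffWithinAt_Ioi x).eq_deriv _ hα hf.hasDerivWithinAt,
    (uniqueDiffWithinAt_Iio x).eq_deriv _ hβ hf.hasDerivWithinAt, specA_self]

theorem HasSpecData.neg (h : HasSpecData f x L α β) : HasSpecData (-f) x (-L) (-α) (-β) := by
  have hquot : (fun y => ((-f) y - -L) / (y - x)) = fun y => -((f y - L) / (y - x)) := by
    funext y
    rw [Pi.neg_apply, neg_sub_neg, ← neg_sub, neg_div]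
  obtain ⟨hleft, hright, hα, hβ⟩ := h
  rw [HasSpecData, hquot]
  exact ⟨hleft.neg, hright.neg, hα.neg, hβ.neg⟩

theorem HasSpecDerivAt.neg (h : HasSpecDerivAt f x d) : HasSpecDerivAt (-f) x (-d) := by
  obtain ⟨L, α, β, hdata, rfl⟩ := h
  exact ⟨-L, -α, -β, hdata.neg, (specA_neg α β).symm⟩

end SpecularData

section OneSidedDerivatives

variable {f : ℝ → ℝ} {c d : ℝ}

theorem nonneg_of_hasDerivWithinAt_Ioi (hf : HasDerivWithinAt f d (Ioi c) c)
    (h : ∃ᶠ t in 𝓝[>] c, f c ≤ f t) : 0 ≤ d := by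
  refine ge_of_tendsto_of_frequently
    ((hasDerivWithinAt_iff_tendsto_slope' self_notMem_Ioi).1 hf) ?_
  refine (h.and_eventually self_mem_nhdsWithin).mono fun t ⟨hle, hct⟩ => ?_
  exact (slope_nonneg_iff_of_le (le_of_lt hct)).2 hle

theorem nonneg_of_hasDerivWithinAt_Iio (hf : HasDerivWithinAt f d (Iio c) c)
    (h : ∃ᶠ t in 𝓝[<] c, f t ≤ f c) : 0 ≤ d := by
  refine ge_of_tendsto_of_frequently
    ((hasDerivWithinAt_iff_tendsto_slope' self_notMem_Iio).1 hf) ?_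
  refine (h.and_eventually self_mem_nhdsWithin).mono fun t ⟨hle, htc⟩ => ?_
  rw [slope_comm]
  exact (slope_nonneg_iff_of_le (le_of_lt htc)).2 hle

end OneSidedDerivatives

theorem exists_forall_Ico_le_and_frequently_lt {X Y : Type*}
    [ConditionallyCompleteLinearOrder X] [DenselyOrdered X] [TopologicalSpace X] [OrderTopology X]
    [LinearOrder Y] [DenselyOrdered Y] [TopologicalSpace Y] [OrderClosedTopology Y]
    {f : X → Y} {x y : X} (hxy : x ≤ y) (hf : ContinuousOn f (Icc x y))
    (h : f x < f y) :
    ∃ c ∈ Ioo x y, (∀ t ∈ Ico x c, f t ≤ f c) ∧ ∃ᶠ t in 𝓝[>] c, f c < f t := by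
  obtain ⟨m, hxm, hmy⟩ := exists_between h
  let S := {t ∈ Icc x y | m < f t}
  have hyS : y ∈ S := ⟨right_mem_Icc.2 hxy, hmy⟩
  obtain ⟨c, hc⟩ : ∃ c, IsGLB S c := ⟨_, isGLB_csInf ⟨y, hyS⟩ ⟨x, fun t ht => ht.1.1⟩⟩
  have hcI : c ∈ Icc x y := ⟨hc.2 fun t ht => ht.1.1, hc.1 hyS⟩
  have hbefore : ∀ t ∈ Ico x c, f t ≤ m := fun t ht =>
    not_lt.1 fun hmt => (hc.1 ⟨⟨ht.1, ht.2.le.trans hcI.2⟩, hmt⟩).not_gt ht.2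
  have hmc : m ≤ f c :=
    continuousWithinAt_const.closure_le (hc.mem_closure ⟨y, hyS⟩)
      ((hf c hcI).mono fun t ht => ht.1) fun t ht => ht.2.le
  have hxc : x < c := hcI.1.lt_of_ne fun hxc => (hxc ▸ hmc).not_gt hxm
  have hcm : f c ≤ m := by
    refine ContinuousWithinAt.closure_le (s := Ico x c) ?_
      ((hf c hcI).mono fun t ht => ⟨ht.1, ht.2.le.trans hcI.2⟩) continuousWithinAt_const hbefore
    rw [closure_Ico hxc.ne]
    exact right_mem_Icc.2 hxc.le
  have hcy : c < y := hcI.2.lt_of_ne fun hcy => (hcy ▸ hcm).not_gt hmy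
  refine ⟨c, ⟨hxc, hcy⟩, fun t ht => (hbefore t ht).trans hmc, ?_⟩
  refine frequently_nhdsWithin_iff.2 ((hc.frequently_nhds_mem ⟨y, hyS⟩).mono fun t ht => ?_)
  have hct : f c < f t := hcm.trans_lt ht.2
  exact ⟨hct, (hc.1 ht).lt_of_ne fun hct' => hct.ne (congrArg f hct')⟩

section MeanValue

variable {f g : ℝ → ℝ} {x y m M : ℝ}

theorem exists_le_specDeriv_of_lt_slope (hxy : x < y) (hf : ContinuousOn f (Icc x y))
    (hfg : ∀ t ∈ Ioo x y, HasSpecDerivAt f t (g t)) (hM : M < slope f x y) :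
    ∃ c ∈ Ioo x y, M ≤ g c := by
  have hrise : f x - M * x < f y - M * y := by
    rw [slope_def_field, lt_div_iff₀ (sub_pos.2 hxy)] at hM
    linarith
  obtain ⟨c, hc, hbefore, hafter⟩ := exists_forall_Ico_le_and_frequently_lt
    (f := fun t => f t - M * t) hxy.le (by fun_prop) hrise
  obtain ⟨α, β, hα, hβ, hgc⟩ :=
    (hfg c hc).exists_hasDerivWithinAt (hf.continuousAt (Icc_mem_nhds hc.1 hc.2))
  have hline : HasDerivAt (fun t => M * t) M c := hasDerivAt_const_mul M
  have hleft : ∀ᶠ t in 𝓝[<] c, f t - M * t ≤ f c - M * c :=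
    mem_of_superset (Ico_mem_nhdsLT hc.1) hbefore
  have hMα : 0 ≤ α - M :=
    nonneg_of_hasDerivWithinAt_Ioi (hα.sub hline.hasDerivWithinAt) (hafter.mono fun t ht => ht.le)
  have hMβ : 0 ≤ β - M :=
    nonneg_of_hasDerivWithinAt_Iio (hβ.sub hline.hasDerivWithinAt) hleft.frequently
  exact ⟨c, hc, hgc ▸ le_specA (sub_nonneg.1 hMα) (sub_nonneg.1 hMβ)⟩

theorem slope_le_of_specDeriv_le (hxy : x < y) (hf : ContinuousOn f (Icc x y))
    (hfg : ∀ t ∈ Ioo x y, HasSpecDerivAt f t (g t)) (hg : ∀ t ∈ Ioo x y, g t ≤ M) :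
    slope f x y ≤ M := by
  by_contra! hlt
  obtain ⟨K, hMK, hK⟩ := exists_between hlt
  obtain ⟨c, hc, hKc⟩ := exists_le_specDeriv_of_lt_slope hxy hf hfg hK
  exact (hMK.trans_le hKc).not_ge (hg c hc)

theorem le_slope_of_le_specDeriv (hxy : x < y) (hf : ContinuousOn f (Icc x y))
    (hfg : ∀ t ∈ Ioo x y, HasSpecDerivAt f t (g t)) (hg : ∀ t ∈ Ioo x y, m ≤ g t) :
    m ≤ slope f x y := by
  have hneg : slope (-f) x y ≤ -m :=
    slope_le_of_specDeriv_le hxy hf.neg (fun t ht => (hfg t ht).neg)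
      fun t ht => neg_le_neg (hg t ht)
  rwa [slope_neg_fun, Pi.neg_apply, Pi.neg_apply, neg_le_neg_iff] at hneg

theorem slope_mem_Icc_of_specDeriv_mem_Icc (hxy : x ≠ y) (hf : ContinuousOn f (uIcc x y))
    (hfg : ∀ t ∈ uIoo x y, HasSpecDerivAt f t (g t)) (hg : ∀ t ∈ uIoo x y, g t ∈ Icc m M) :
    slope f x y ∈ Icc m M := by
  wlog hlt : x < y generalizing x y
  · rw [slope_comm]
    rw [uIcc_comm] at hf
    rw [uIoo_comm] at hfg hg
    exact this hxy.symm hf hfg hg (hxy.lt_or_gt.resolve_left hlt)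
  rw [uIcc_of_lt hlt] at hf
  rw [uIoo_of_lt hlt] at hfg hg
  exact ⟨le_slope_of_le_specDeriv hlt hf hfg fun t ht => (hg t ht).1,
    slope_le_of_specDeriv_le hlt hf hfg fun t ht => (hg t ht).2⟩

end MeanValue

theorem eventually_forall_uIoo_of_eventually_nhdsNE {X : Type*} [LinearOrder X] [TopologicalSpace X]
    [OrderTopology X] {x : X} {p : X → Prop} (h : ∀ᶠ t in 𝓝[≠] x, p t) :
    ∀ᶠ y in 𝓝 x, ∀ t ∈ uIoo x y, p t := by
  have hsmall : Tendsto (fun y => uIcc x y) (𝓝 x) (𝓝 x).smallSets :=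
    tendsto_const_nhds.uIcc tendsto_id
  filter_upwards [hsmall.eventually (eventually_nhdsWithin_iff.1 h).smallSets] with y hy t ht
  exact hy t (uIoo_subset_uIcc_self ht) (ne_of_mem_of_not_mem ht left_notMem_uIoo)

theorem hasDerivAt_of_tendsto_specDeriv {f g : ℝ → ℝ} {x L : ℝ}
    (hf : ∀ᶠ t in 𝓝 x, ContinuousAt f t)
    (hfg : ∀ᶠ t in 𝓝[≠] x, HasSpecDerivAt f t (g t)) (hg : Tendsto g (𝓝[≠] x) (𝓝 L)) :
    HasDerivAt f L x := by
  rw [hasDerivAt_iff_tendsto_slope, (nhds_basis_Icc_pos L).tendsto_right_iff]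
  intro ε hε
  have hgε : ∀ᶠ t in 𝓝[≠] x, g t ∈ Icc (L - ε) (L + ε) :=
    hg.eventually_mem (Icc_mem_nhds (by linarith) (by linarith))
  have hcont : ∀ᶠ y in 𝓝 x, ContinuousOn f (uIcc x y) := by
    filter_upwards [(tendsto_const_nhds.uIcc tendsto_id).eventually hf.smallSets] with y hy
    exact fun t ht => (hy t ht).continuousWithinAt
  filter_upwards [self_mem_nhdsWithin, nhdsWithin_le_nhds hcont,
    nhdsWithin_le_nhds (eventually_forall_uIoo_of_eventually_nhdsNE hfg),
    nhdsWithin_le_nhds (eventually_forall_uIoo_of_eventually_nhdsNE hgε)] with y hyx hfy hfgy hgy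
  exact slope_mem_Icc_of_specDeriv_mem_Icc (Ne.symm hyx) hfy hfgy hgy

theorem continuous_specular_deriv_of_second_order_general {f g : ℝ → ℝ} {U : Set ℝ}
    (hU : IsOpen U) (hcont : ContinuousOn f U) (hspec : ∀ x ∈ U, HasSpecDerivAt f x (g x))
    (hlim : ∀ x ∈ U, ∃ L, Tendsto g (𝓝[≠] x) (𝓝 L)) :
    ContinuousOn g U := by
  intro x hx
  obtain ⟨L, hL⟩ := hlim x hx
  have hUx : ∀ᶠ t in 𝓝 x, t ∈ U := hU.mem_nhds hx
  have hderiv : HasDerivAt f L x := hasDerivAt_of_tendsto_specDeriv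
    (hUx.mono fun t ht => hcont.continuousAt (hU.mem_nhds ht))
    (nhdsWithin_le_nhds (hUx.mono hspec)) hL
  rw [← (hspec x hx).eq_of_hasDerivAt hderiv] at hL
  exact (continuousAt_iff_punctured_nhds.2 hL).continuousWithinAt

theorem continuous_specular_deriv_of_second_order (f g : ℝ → ℝ) (a b : ℝ)
    (hcont : ContinuousOn f (Set.Ioo a b))
    (hspec : ∀ x ∈ Set.Ioo a b, HasSpecDerivAt f x (g x))
    (hspec2 : ∀ x ∈ Set.Ioo a b, SpecDifferentiableAt g x) :
    ContinuousOn g (Set.Ioo a b) := by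
  refine continuous_specular_deriv_of_second_order_general isOpen_Ioo hcont hspec fun x hx => ?_
  exact (hspec2 x hx).imp fun L ⟨_, _, hdata⟩ => hdata.tendsto_nhdsNE
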